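/- arXiv:1506.01655 — 2 statements merged into one kernel-verified Lean document; each statement's English description precedes it below -/
import Mathlib

section
/- There exist constants C₁ > 0 and C₂ > 0, depending only on L, η, β, κ, τ, m, δ and p, such that for every smooth solution (u, θ, q) of the thermoviscoelastic system with second sound satisfying boundary conditions (D) and every t > 0, F₁′(t) ≤ −C₁ E₁(t) + C₂ ( ∫₀ᴸ q² dx + ∫₀ᴸ q_t² dx + ∫₀ᴸ δ(x) u_xt² dx ). -/
open MeasureTheory Set intervalIntegral

noncomputable section

/-- Time derivative of a function of `(x, t)` (curried as `x ↦ t ↦ f x t`). -/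
def pdt (f : ℝ → ℝ → ℝ) : ℝ → ℝ → ℝ := fun x t => deriv (f x) t

/-- Space derivative of a function of `(x, t)`. -/
def pdx (f : ℝ → ℝ → ℝ) : ℝ → ℝ → ℝ := fun x t => deriv (fun y => f y t) x

/-- A smooth solution of the thermoviscoelastic system with second sound:
`u, θ, q` are `C^∞` and the three PDEs hold on `(0, L) × (0, ∞)`. -/
def IsSmoothSol (L η β κ τ : ℝ) (m δ p : ℝ → ℝ) (u θ q : ℝ → ℝ → ℝ) : Prop :=
  ContDiff ℝ (⊤ : ℕ∞) (Function.uncurry u) ∧ ContDiff ℝ (⊤ : ℕ∞) (Function.uncurry θ) ∧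
    ContDiff ℝ (⊤ : ℕ∞) (Function.uncurry q) ∧
    ∀ x ∈ Ioo (0 : ℝ) L, ∀ t : ℝ, 0 < t →
      (m x * pdt (pdt u) x t
          - pdx (fun y s => p y * pdx u y s + 2 * δ y * pdt (pdx u) y s) x t
          + η * pdx θ x t = 0) ∧
      (pdt θ x t + κ * pdx q x t + η * pdt (pdx u) x t = 0) ∧
      (τ * pdt q x t + β * q x t + κ * pdx θ x t = 0)

/-- Boundary conditions (D): clamped structure, temperature zero at both ends. -/
def BCD (L : ℝ) (u θ : ℝ → ℝ → ℝ) : Prop :=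
  ∀ t : ℝ, 0 ≤ t → u 0 t = 0 ∧ u L t = 0 ∧ θ 0 t = 0 ∧ θ L t = 0

/-- The first-order energy `E₁`. -/
def energy1 (L τ : ℝ) (m p : ℝ → ℝ) (u θ q : ℝ → ℝ → ℝ) (t : ℝ) : ℝ :=
  (1 / 2) * ((∫ x in (0 : ℝ)..L, p x * (pdx u x t) ^ 2)
    + (∫ x in (0 : ℝ)..L, m x * (pdt u x t) ^ 2)
    + (∫ x in (0 : ℝ)..L, (θ x t) ^ 2)
    + τ * ∫ x in (0 : ℝ)..L, (q x t) ^ 2)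

/-- The auxiliary functional `F₁`. -/
def F1 (L : ℝ) (m δ : ℝ → ℝ) (u : ℝ → ℝ → ℝ) (t : ℝ) : ℝ :=
  (∫ x in (0 : ℝ)..L, m x * pdt u x t * u x t)
    + ∫ x in (0 : ℝ)..L, δ x * (pdx u x t) ^ 2

abbrev Sm (f : ℝ → ℝ → ℝ) : Prop := ContDiff ℝ (⊤ : ℕ∞) (Function.uncurry f)

lemma Sm.hasDerivAt_t {f : ℝ → ℝ → ℝ} (hf : Sm f) (x t : ℝ) :
    HasDerivAt (f x) (fderiv ℝ (Function.uncurry f) (x, t) (0, 1)) t := by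
  have h1 : HasFDerivAt (Function.uncurry f) (fderiv ℝ (Function.uncurry f) (x, t)) (x, t) :=
    (hf.differentiable (by simp) (x, t)).hasFDerivAt
  have h2 : HasDerivAt (fun s : ℝ => (x, s)) ((0 : ℝ), (1 : ℝ)) t :=
    (hasDerivAt_const t x).prodMk (hasDerivAt_id t)
  exact h1.comp_hasDerivAt t h2

lemma Sm.hasDerivAt_x {f : ℝ → ℝ → ℝ} (hf : Sm f) (x t : ℝ) :
    HasDerivAt (fun y => f y t) (fderiv ℝ (Function.uncurry f) (x, t) (1, 0)) x := by
  have h1 : HasFDerivAt (Function.uncurry f) (fderiv ℝ (Function.uncurry f) (x, t)) (x, t) :=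
    (hf.differentiable (by simp) (x, t)).hasFDerivAt
  have h2 : HasDerivAt (fun s : ℝ => (s, t)) ((1 : ℝ), (0 : ℝ)) x :=
    (hasDerivAt_id x).prodMk (hasDerivAt_const x t)
  exact h1.comp_hasDerivAt x h2

lemma Sm.pdt_eq {f : ℝ → ℝ → ℝ} (hf : Sm f) (x t : ℝ) :
    pdt f x t = fderiv ℝ (Function.uncurry f) (x, t) (0, 1) := (hf.hasDerivAt_t x t).deriv

lemma Sm.pdx_eq {f : ℝ → ℝ → ℝ} (hf : Sm f) (x t : ℝ) :
    pdx f x t = fderiv ℝ (Function.uncurry f) (x, t) (1, 0) := (hf.hasDerivAt_x x t).deriv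

lemma Sm.hd_t {f : ℝ → ℝ → ℝ} (hf : Sm f) (x t : ℝ) : HasDerivAt (f x) (pdt f x t) t := by
  rw [hf.pdt_eq]; exact hf.hasDerivAt_t x t

lemma Sm.hd_x {f : ℝ → ℝ → ℝ} (hf : Sm f) (x t : ℝ) :
    HasDerivAt (fun y => f y t) (pdx f x t) x := by
  rw [hf.pdx_eq]; exact hf.hasDerivAt_x x t

lemma Sm.t {f : ℝ → ℝ → ℝ} (hf : Sm f) : Sm (pdt f) := by
  have : Function.uncurry (pdt f) = fun z => fderiv ℝ (Function.uncurry f) z (0, 1) := by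
    ext ⟨x, t⟩; exact hf.pdt_eq x t
  rw [Sm, this]
  exact (hf.fderiv_right (by simp)).clm_apply contDiff_const

lemma Sm.x {f : ℝ → ℝ → ℝ} (hf : Sm f) : Sm (pdx f) := by
  have : Function.uncurry (pdx f) = fun z => fderiv ℝ (Function.uncurry f) z (1, 0) := by
    ext ⟨x, t⟩; exact hf.pdx_eq x t
  rw [Sm, this]
  exact (hf.fderiv_right (by simp)).clm_apply contDiff_const

lemma Sm.comm {f : ℝ → ℝ → ℝ} (hf : Sm f) (x t : ℝ) : pdx (pdt f) x t = pdt (pdx f) x t := by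
  have h1 : Function.uncurry (pdt f) = fun z => fderiv ℝ (Function.uncurry f) z (0, 1) := by
    ext ⟨x, t⟩; exact hf.pdt_eq x t
  have h2 : Function.uncurry (pdx f) = fun z => fderiv ℝ (Function.uncurry f) z (1, 0) := by
    ext ⟨x, t⟩; exact hf.pdx_eq x t
  have hd : DifferentiableAt ℝ (fderiv ℝ (Function.uncurry f)) (x, t) :=
    (hf.fderiv_right (m := ((⊤ : ℕ∞) : WithTop ℕ∞)) (by simp)).differentiable (by simp) _
  rw [hf.t.pdx_eq, hf.x.pdt_eq, h1, h2, fderiv_clm_apply hd (by fun_prop),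
    fderiv_clm_apply hd (by fun_prop)]
  have := (hf.contDiffAt (x := (x, t))).isSymmSndFDerivAt (by
    simp only [minSmoothness_of_isRCLikeNormedField]
    exact WithTop.coe_le_coe.2 (le_top : (2 : ℕ∞) ≤ ⊤))
  simpa using this.eq (1, 0) (0, 1)

lemma Sm.mul {f g : ℝ → ℝ → ℝ} (hf : Sm f) (hg : Sm g) : Sm (fun x t => f x t * g x t) :=
  ContDiff.mul hf hg

lemma Sm.cont {f : ℝ → ℝ → ℝ} (hf : Sm f) (t : ℝ) : Continuous (fun x => f x t) :=
  continuous_iff_continuousAt.2 fun x => (hf.hd_x x t).continuousAt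

lemma param_deriv {L : ℝ} (hL : 0 < L) {a : ℝ → ℝ} (ha : ContinuousOn a (Icc 0 L))
    {f : ℝ → ℝ → ℝ} (hf : Sm f) (t : ℝ) :
    HasDerivAt (fun s => ∫ x in (0 : ℝ)..L, a x * f x s)
      (∫ x in (0 : ℝ)..L, a x * pdt f x t) t := by
  have hc : ∀ {g : ℝ → ℝ → ℝ}, Sm g → ∀ s,
      IntervalIntegrable (fun x => a x * g x s) volume 0 L := by
    intro g hg s
    apply ContinuousOn.intervalIntegrable_of_Icc hL.le
    exact ha.mul (hg.cont s).continuousOn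
  obtain ⟨C, hC⟩ := (isCompact_Icc (a := (0 : ℝ)) (b := L)).prod
    (isCompact_Icc (a := t - 1) (b := t + 1)) |>.exists_bound_of_continuousOn
    (f := fun z : ℝ × ℝ => a z.1 * Function.uncurry (pdt f) z) (by
      apply ContinuousOn.mul
      · exact ha.comp continuousOn_fst (fun z hz => hz.1)
      · exact hf.t.continuous.continuousOn)
  refine (hasDerivAt_integral_of_dominated_loc_of_deriv_le
    (F := fun s x => a x * f x s) (F' := fun s x => a x * pdt f x s) (bound := fun _ => C)
    (s := Icc (t - 1) (t + 1)) (Icc_mem_nhds (by linarith) (by linarith)) ?_ (hc hf t) ?_ ?_ ?_ ?_).2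
  · filter_upwards with s
    have := (hc hf s).def'
    exact this.aestronglyMeasurable
  · exact (hc hf.t t).def'.aestronglyMeasurable
  · filter_upwards with x hx s hs
    rw [uIoc_of_le hL.le] at hx
    exact hC (x, s) ⟨⟨hx.1.le, hx.2⟩, hs⟩
  · exact intervalIntegrable_const
  · filter_upwards with x hx s hs
    exact (hf.hd_t x s).const_mul _

lemma poincare {L : ℝ} (hL : 0 < L) {f f' : ℝ → ℝ} (hf : ∀ x, HasDerivAt f (f' x) x)
    (hf' : Continuous f') (h0 : f 0 = 0) :
    ∫ x in (0 : ℝ)..L, f x ^ 2 ≤ L ^ 2 * ∫ x in (0 : ℝ)..L, f' x ^ 2 := by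
  have hfc : Continuous f := continuous_iff_continuousAt.2 fun x => (hf x).continuousAt
  set A := ∫ x in (0 : ℝ)..L, f' x ^ 2 with hA
  have key : ∀ x ∈ Icc (0 : ℝ) L, f x ^ 2 ≤ L * A := by
    intro x hx
    have hA0 : 0 ≤ A := integral_nonneg hL.le fun _ _ => sq_nonneg _
    rcases hx.1.eq_or_lt with h | h
    · rw [← h, h0]; simpa using mul_nonneg hL.le hA0
    have hAx : ∫ s in (0 : ℝ)..x, f' s ^ 2 ≤ A := by
      apply integral_mono_interval le_rfl hx.1 hx.2
      · filter_upwards with y using sq_nonneg _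
      · exact (hf'.pow 2).intervalIntegrable _ _
    have h1 : ∫ s in (0 : ℝ)..x, f' s = f x := by
      rw [integral_eq_sub_of_hasDerivAt (fun y _ => hf y) (hf'.intervalIntegrable _ _), h0, sub_zero]
    have h2 : 0 ≤ ∫ s in (0 : ℝ)..x, (f' s - f x / x) ^ 2 :=
      integral_nonneg hx.1 fun _ _ => sq_nonneg _
    have h3 : ∫ s in (0 : ℝ)..x, (f' s - f x / x) ^ 2
        = (∫ s in (0 : ℝ)..x, f' s ^ 2) - 2 * (f x / x) * f x + x * (f x / x) ^ 2 := by
      have : ∀ s, (f' s - f x / x) ^ 2 = f' s ^ 2 - 2 * (f x / x) * f' s + (f x / x) ^ 2 := by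
        intro s; ring
      simp_rw [this]
      rw [intervalIntegral.integral_add, intervalIntegral.integral_sub, intervalIntegral.integral_const_mul, h1]
      · simp
      all_goals apply Continuous.intervalIntegrable; fun_prop
    have h4 : (∫ s in (0 : ℝ)..x, f' s ^ 2) - 2 * (f x / x) * f x + x * (f x / x) ^ 2
        = (∫ s in (0 : ℝ)..x, f' s ^ 2) - f x ^ 2 / x := by field_simp; ring
    have h5 : f x ^ 2 / x ≤ A := by linarith
    rw [div_le_iff₀ h] at h5
    calc f x ^ 2 ≤ A * x := h5
      _ ≤ A * L := by gcongr; exact hx.2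
      _ = L * A := mul_comm _ _
  calc ∫ x in (0 : ℝ)..L, f x ^ 2 ≤ ∫ x in (0 : ℝ)..L, L * A :=
        integral_mono_on hL.le ((hfc.pow 2).intervalIntegrable _ _) intervalIntegrable_const key
    _ = L ^ 2 * A := by simp; ring

lemma ac_of_hd {L : ℝ} (hL : 0 < L) {f f' : ℝ → ℝ} (hf : ∀ x, HasDerivAt f (f' x) x)
    (hf' : Continuous f') : AbsolutelyContinuousOnInterval f 0 L := by
  have h : ∀ x, f x = f 0 + ∫ s in (0 : ℝ)..x, f' s := by
    intro x
    rw [integral_eq_sub_of_hasDerivAt (fun y _ => hf y) (hf'.intervalIntegrable _ _)]; ring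
  obtain ⟨C, hC⟩ := (isCompact_Icc (a := (0 : ℝ)) (b := L)).exists_bound_of_continuousOn
    hf'.continuousOn
  have : LipschitzOnWith (Real.toNNReal C) f (uIcc 0 L) := by
    rw [uIcc_of_le hL.le]
    apply (convex_Icc 0 L).lipschitzOnWith_of_nnnorm_hasDerivWithin_le
      (fun x _ => (hf x).hasDerivWithinAt)
    intro x hx
    rw [← NNReal.coe_le_coe, coe_nnnorm]
    exact (hC x hx).trans (Real.le_coe_toNNReal C)
  exact this.absolutelyContinuousOnInterval

/-- The exact formula for the derivative of `F1`. -/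
lemma F1_deriv_formula {L η β κ τ : ℝ} (hL : 0 < L) {m δ p : ℝ → ℝ}
    (hm : ContinuousOn m (Icc 0 L))
    (hδ : AbsolutelyContinuousOnInterval δ 0 L) (hp : AbsolutelyContinuousOnInterval p 0 L)
    {u θ q : ℝ → ℝ → ℝ} (hs : IsSmoothSol L η β κ τ m δ p u θ q) (hb : BCD L u θ)
    {t : ℝ} (ht : 0 < t) :
    HasDerivAt (F1 L m δ u)
      (∫ x in (0 : ℝ)..L, (m x * pdt u x t ^ 2 - p x * pdx u x t ^ 2 + η * (θ x t * pdx u x t))) t := by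
  obtain ⟨hu, hθ, hq, hpde⟩ := hs
  change Sm u at hu
  change Sm θ at hθ
  have hδc : ContinuousOn δ (Icc 0 L) := by simpa [uIcc_of_le hL.le] using hδ.continuousOn
  have hpc : ContinuousOn p (Icc 0 L) := by simpa [uIcc_of_le hL.le] using hp.continuousOn
  have d1 := param_deriv hL hm (hu.t.mul hu) t
  have d2 := param_deriv hL hδc (hu.x.mul hu.x) t
  have d := d1.add d2
  have e1 : (fun s => ∫ x in (0 : ℝ)..L, m x * (pdt u x s * u x s)) +
      (fun s => ∫ x in (0 : ℝ)..L, δ x * (pdx u x s * pdx u x s)) = F1 L m δ u := by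
    ext s; simp only [Pi.add_apply, F1, sq, mul_assoc]
  rw [e1] at d
  refine d.congr_deriv ?_
  symm
  have p1 : ∀ x, pdt (fun x t => pdt u x t * u x t) x t
      = pdt (pdt u) x t * u x t + pdt u x t * pdt u x t := fun x =>
    ((hu.t.hd_t x t).mul (hu.hd_t x t)).deriv
  have p2 : ∀ x, pdt (fun x t => pdx u x t * pdx u x t) x t
      = pdt (pdx u) x t * pdx u x t + pdx u x t * pdt (pdx u) x t := fun x =>
    ((hu.x.hd_t x t).mul (hu.x.hd_t x t)).deriv
  simp only [p1, p2]
  -- continuity of slices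
  have cu := hu.cont t
  have cut := hu.t.cont t
  have cutt := hu.t.t.cont t
  have cux := hu.x.cont t
  have cuxt := hu.x.t.cont t
  have cθ := hθ.cont t
  have cθx := hθ.x.cont t
  -- integration by parts
  have au : AbsolutelyContinuousOnInterval (fun y => u y t) 0 L :=
    ac_of_hd hL (fun x => hu.hd_x x t) cux
  have aG : AbsolutelyContinuousOnInterval
      (fun y => p y * pdx u y t + 2 * δ y * pdt (pdx u) y t) 0 L := by
    have a1 := ac_of_hd hL (fun x => hu.x.hd_x x t) (hu.x.x.cont t)
    have a2 := ac_of_hd hL (fun x => hu.x.t.hd_x x t) (hu.x.t.x.cont t)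
    exact (hp.mul a1).add ((hδ.const_mul 2).mul a2)
  have ibp := au.integral_mul_deriv_eq_deriv_mul aG
  obtain ⟨b1, b2, b3, b4⟩ := hb t ht.le
  have ibp2 := integral_mul_deriv_eq_deriv_mul (a := 0) (b := L) (fun x _ => hu.hd_x x t)
    (fun x _ => hθ.hd_x x t) (cux.intervalIntegrable _ _) (cθx.intervalIntegrable _ _)
  have r1 : ∫ x in (0 : ℝ)..L, u x t * deriv
      (fun y => p y * pdx u y t + 2 * δ y * pdt (pdx u) y t) x
      = ∫ x in (0 : ℝ)..L, u x t * (m x * pdt (pdt u) x t + η * pdx θ x t) := by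
    apply intervalIntegral.integral_congr_ae
    have hne : ∀ᵐ x : ℝ, x ≠ L := by simp [ae_iff, measure_singleton]
    filter_upwards [hne] with x hxL hx'
    rw [uIoc_of_le hL.le] at hx'
    have hx : x ∈ Ioo 0 L := ⟨hx'.1, lt_of_le_of_ne hx'.2 hxL⟩
    have := (hpde x hx t ht).1
    simp only [pdx] at this ⊢
    congr 1
    linarith
  have r2 : ∫ x in (0 : ℝ)..L, deriv (fun y => u y t) x *
      (p x * pdx u x t + 2 * δ x * pdt (pdx u) x t)
      = ∫ x in (0 : ℝ)..L, pdx u x t * (p x * pdx u x t + 2 * δ x * pdt (pdx u) x t) := rfl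
  rw [r1, r2] at ibp
  simp only [b1, b2, b3, b4, zero_mul, sub_zero, zero_sub] at ibp ibp2
  have I : ∀ {g : ℝ → ℝ}, ContinuousOn g (Icc 0 L) → IntervalIntegrable g volume 0 L :=
    fun h => h.intervalIntegrable_of_Icc hL.le
  have i1 : IntervalIntegrable (fun x => u x t * (m x * pdt (pdt u) x t + η * pdx θ x t))
    volume 0 L := I (by fun_prop)
  have i2 : IntervalIntegrable (fun x => pdx u x t *
    (p x * pdx u x t + 2 * δ x * pdt (pdx u) x t)) volume 0 L := I (by fun_prop)
  have i3 : IntervalIntegrable (fun x => u x t * pdx θ x t) volume 0 L := I (by fun_prop)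
  have i4 : IntervalIntegrable (fun x => pdx u x t * θ x t) volume 0 L := I (by fun_prop)
  have i5 : IntervalIntegrable (fun x => m x * (pdt (pdt u) x t * u x t + pdt u x t * pdt u x t))
    volume 0 L := I (by fun_prop)
  have i6 : IntervalIntegrable (fun x => δ x * (pdt (pdx u) x t * pdx u x t +
    pdx u x t * pdt (pdx u) x t)) volume 0 L := I (by fun_prop)
  have z1 : ∫ x in (0 : ℝ)..L, (u x t * (m x * pdt (pdt u) x t + η * pdx θ x t)
      + pdx u x t * (p x * pdx u x t + 2 * δ x * pdt (pdx u) x t)) = 0 := by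
    rw [integral_add i1 i2, ibp]; ring
  have z2 : ∫ x in (0 : ℝ)..L, (u x t * pdx θ x t + pdx u x t * θ x t) = 0 := by
    rw [integral_add i3 i4, ibp2]; ring
  have z3 : ∫ x in (0 : ℝ)..L, η * (u x t * pdx θ x t + pdx u x t * θ x t) = 0 := by
    rw [intervalIntegral.integral_const_mul, z2, mul_zero]
  have w0 := intervalIntegral.integral_add i5 i6
  have w1 := intervalIntegral.integral_sub (i5.add i6) (i1.add i2)
  have w2 := intervalIntegral.integral_add ((i5.add i6).sub (i1.add i2)) ((i3.add i4).const_mul η)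
  rw [z1, sub_zero] at w1
  rw [z3, add_zero] at w2
  rw [← w0, ← w1, ← w2]
  congr 1
  ext x
  ring

theorem F1_derivative_estimate
    (L η β κ τ : ℝ) (hL : 0 < L) (hη : 0 < η) (hβ : 0 < β) (hκ : 0 < κ) (hτ : 0 < τ)
    (m δ p : ℝ → ℝ)
    (hmLip : ∃ K, LipschitzOnWith K m (Icc 0 L))
    (hδLip : ∃ K, LipschitzOnWith K δ (Icc 0 L))
    (hpLip : ∃ K, LipschitzOnWith K p (Icc 0 L))
    (hmpos : ∀ x ∈ Icc (0 : ℝ) L, 0 < m x)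
    (hδpos : ∀ x ∈ Icc (0 : ℝ) L, 0 < δ x)
    (hppos : ∀ x ∈ Icc (0 : ℝ) L, 0 < p x)
    :
    ∃ C₁ > (0 : ℝ), ∃ C₂ > (0 : ℝ),
      ∀ u θ q : ℝ → ℝ → ℝ,
        IsSmoothSol L η β κ τ m δ p u θ q → BCD L u θ →
          ∀ t : ℝ, 0 < t →
            HasDerivAt (F1 L m δ u) (deriv (F1 L m δ u) t) t ∧
              deriv (F1 L m δ u) t
                ≤ -C₁ * energy1 L τ m p u θ q t
                  + C₂ * ((∫ x in (0 : ℝ)..L, (q x t) ^ 2)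
                    + (∫ x in (0 : ℝ)..L, (pdt q x t) ^ 2)
                    + ∫ x in (0 : ℝ)..L, δ x * (pdt (pdx u) x t) ^ 2) := by
  obtain ⟨Km, hKm⟩ := hmLip
  obtain ⟨Kδ, hKδ⟩ := hδLip
  obtain ⟨Kp, hKp⟩ := hpLip
  have hmc := hKm.continuousOn
  have hδc := hKδ.continuousOn
  have hpc := hKp.continuousOn
  have aδ : AbsolutelyContinuousOnInterval δ 0 L :=
    LipschitzOnWith.absolutelyContinuousOnInterval (by rwa [uIcc_of_le hL.le])
  have ap : AbsolutelyContinuousOnInterval p 0 L :=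
    LipschitzOnWith.absolutelyContinuousOnInterval (by rwa [uIcc_of_le hL.le])
  have hne : (Icc (0 : ℝ) L).Nonempty := ⟨0, le_rfl, hL.le⟩
  obtain ⟨xm, hxm, hm1⟩ := isCompact_Icc.exists_isMaxOn hne hmc
  obtain ⟨xd, hxd, hd0⟩ := isCompact_Icc.exists_isMinOn hne hδc
  obtain ⟨xp, hxp, hp0⟩ := isCompact_Icc.exists_isMinOn hne hpc
  have M0 := hmpos xm hxm
  have D0 := hδpos xd hxd
  have P0 := hppos xp hxp
  set m1 := m xm
  set d0 := δ xd
  set p0 := p xp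
  replace hm1 : ∀ x ∈ Icc (0 : ℝ) L, m x ≤ m1 := fun x hx => hm1 hx
  replace hd0 : ∀ x ∈ Icc (0 : ℝ) L, d0 ≤ δ x := fun x hx => hd0 hx
  replace hp0 : ∀ x ∈ Icc (0 : ℝ) L, p0 ≤ p x := fun x hx => hp0 hx
  -- constants
  set A := m1 * (L ^ 2 / d0) with hA
  set B := 1 / 2 + η ^ 2 / (2 * p0) with hB
  set c := L ^ 2 * (2 * (τ ^ 2 + β ^ 2) / κ ^ 2) with hc
  have hA0 : 0 < A := by positivity
  have hB0 : 0 < B := by positivity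
  have hc0 : 0 < c := by positivity
  refine ⟨1, one_pos, 3 / 2 * A + B * c + τ / 2, by positivity, ?_⟩
  intro u θ q hs hb t ht
  have hd := F1_deriv_formula hL hmc aδ ap hs hb ht
  refine ⟨hd.differentiableAt.hasDerivAt, ?_⟩
  rw [hd.deriv]
  obtain ⟨hu, hθ, hq, hpde⟩ := hs
  change Sm u at hu
  change Sm θ at hθ
  change Sm q at hq
  have cut := hu.t.cont t
  have cux := hu.x.cont t
  have cuxt := hu.x.t.cont t
  have cθ := hθ.cont t
  have cθx := hθ.x.cont t
  have cq := hq.cont t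
  have cqt := hq.t.cont t
  have I : ∀ {g : ℝ → ℝ}, ContinuousOn g (Icc 0 L) → IntervalIntegrable g volume 0 L :=
    fun h => h.intervalIntegrable_of_Icc hL.le
  unfold energy1
  set P := ∫ x in (0 : ℝ)..L, p x * (pdx u x t) ^ 2 with hP
  set M := ∫ x in (0 : ℝ)..L, m x * (pdt u x t) ^ 2 with hM
  set T := ∫ x in (0 : ℝ)..L, (θ x t) ^ 2 with hT
  set Q := ∫ x in (0 : ℝ)..L, (q x t) ^ 2 with hQ
  set R := ∫ x in (0 : ℝ)..L, (pdt q x t) ^ 2 with hR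
  set D := ∫ x in (0 : ℝ)..L, δ x * (pdt (pdx u) x t) ^ 2 with hD
  have hQ0 : 0 ≤ Q := integral_nonneg hL.le fun _ _ => sq_nonneg _
  have hR0 : 0 ≤ R := integral_nonneg hL.le fun _ _ => sq_nonneg _
  have hD0 : 0 ≤ D := integral_nonneg hL.le fun x hx => mul_nonneg (hδpos x hx).le (sq_nonneg _)
  have iP : IntervalIntegrable (fun x => p x * (pdx u x t) ^ 2) volume 0 L := I (by fun_prop)
  have iM : IntervalIntegrable (fun x => m x * (pdt u x t) ^ 2) volume 0 L := I (by fun_prop)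
  have iT : IntervalIntegrable (fun x => (θ x t) ^ 2) volume 0 L := I (by fun_prop)
  -- main bound
  have s1 : (∫ x in (0 : ℝ)..L, (m x * pdt u x t ^ 2 - p x * pdx u x t ^ 2
      + η * (θ x t * pdx u x t))) ≤ M - 1 / 2 * P + η ^ 2 / (2 * p0) * T := by
    rw [hM, hP, hT, ← intervalIntegral.integral_const_mul, ← intervalIntegral.integral_const_mul,
      ← integral_sub iM (iP.const_mul _), ← integral_add (iM.sub (iP.const_mul _)) (iT.const_mul _)]
    apply integral_mono_on hL.le (I (by fun_prop)) (I (by fun_prop))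
    intro x hx
    have h1 : η * (θ x t * pdx u x t) ≤ 1 / 2 * (p0 * pdx u x t ^ 2) + η ^ 2 / (2 * p0) * θ x t ^ 2 := by
      have : 1 / 2 * (p0 * pdx u x t ^ 2) + η ^ 2 / (2 * p0) * θ x t ^ 2 - η * (θ x t * pdx u x t)
          = (p0 * pdx u x t - η * θ x t) ^ 2 / (2 * p0) := by field_simp; ring
      have h2 : 0 ≤ (p0 * pdx u x t - η * θ x t) ^ 2 / (2 * p0) := by positivity
      linarith
    have h3 : p0 * pdx u x t ^ 2 ≤ p x * pdx u x t ^ 2 := by gcongr; exact hp0 x hx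
    linarith
  -- bound of M
  have s2 : M ≤ A * D := by
    have hut0 : pdt u 0 t = 0 := by
      have : u 0 =ᶠ[nhds t] fun _ => 0 := by
        filter_upwards [Ioi_mem_nhds ht] with s hs using (hb s (le_of_lt hs)).1
      simp only [pdt]
      rw [this.deriv_eq]; simp
    have h1 : M ≤ m1 * ∫ x in (0 : ℝ)..L, pdt u x t ^ 2 := by
      rw [hM, ← intervalIntegral.integral_const_mul]
      apply integral_mono_on hL.le iM (I (by fun_prop))
      intro x hx
      gcongr
      exact hm1 x hx
    have h2 := poincare hL (f := fun x => pdt u x t) (f' := fun x => pdt (pdx u) x t)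
      (fun x => by rw [← hu.comm]; exact hu.t.hd_x x t) cuxt hut0
    have h3 : d0 * ∫ x in (0 : ℝ)..L, pdt (pdx u) x t ^ 2 ≤ D := by
      rw [hD, ← intervalIntegral.integral_const_mul]
      apply integral_mono_on hL.le (I (by fun_prop)) (I (by fun_prop))
      intro x hx
      gcongr
      exact hd0 x hx
    have h4 : (∫ x in (0 : ℝ)..L, pdt (pdx u) x t ^ 2) ≤ D / d0 := by
      rw [le_div_iff₀ D0]; linarith
    calc M ≤ m1 * ∫ x in (0 : ℝ)..L, pdt u x t ^ 2 := h1
      _ ≤ m1 * (L ^ 2 * (D / d0)) := by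
        gcongr
        exact h2.trans (by gcongr)
      _ = A * D := by rw [hA]; ring
  -- bound of T
  have s3 : T ≤ c * (Q + R) := by
    have h2 := poincare hL (f := fun x => θ x t) (f' := fun x => pdx θ x t)
      (fun x => hθ.hd_x x t) cθx (hb t ht.le).2.2.1
    have h3 : (∫ x in (0 : ℝ)..L, pdx θ x t ^ 2) ≤ 2 * (τ ^ 2 + β ^ 2) / κ ^ 2 * (Q + R) := by
      rw [hQ, hR, ← integral_add (I (by fun_prop)) (I (by fun_prop)),
        ← intervalIntegral.integral_const_mul]
      apply integral_mono_on_of_le_Ioo hL.le (I (by fun_prop)) (I (by fun_prop))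
      intro x hx
      have e := (hpde x hx t ht).2.2
      have e2 : (κ * pdx θ x t) ^ 2 = (τ * pdt q x t + β * q x t) ^ 2 := by
        have : κ * pdx θ x t = -(τ * pdt q x t + β * q x t) := by linarith
        rw [this]; ring
      rw [div_mul_eq_mul_div, le_div_iff₀ (by positivity)]
      nlinarith [sq_nonneg (τ * pdt q x t - β * q x t), sq_nonneg (τ * q x t),
        sq_nonneg (β * pdt q x t)]
    calc T ≤ L ^ 2 * ∫ x in (0 : ℝ)..L, pdx θ x t ^ 2 := h2
      _ ≤ L ^ 2 * (2 * (τ ^ 2 + β ^ 2) / κ ^ 2 * (Q + R)) := by gcongr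
      _ = c * (Q + R) := by rw [hc]; ring
  have s4 : B * T ≤ B * (c * (Q + R)) := by gcongr
  have n1 : 0 ≤ A * Q := by positivity
  have n2 : 0 ≤ A * R := by positivity
  have n3 : 0 ≤ B * c * D := by positivity
  have n4 : 0 ≤ τ * R := by positivity
  have n5 : 0 ≤ τ * D := by positivity
  have s5 : η ^ 2 / (2 * p0) * T = B * T - 1 / 2 * T := by rw [hB]; ring
  linarith
end
end

section
/- There exists a constant C > 0, depending only on L, η, β, κ, τ, m, δ and p (and independent of λ), such that every solution (u, w, θ, q) of the resolvent system with data (f₁, f₂, f₃, f₄) satisfies ∫₀ᴸ p(x) |u′(x)|² dx ≤ C ( ‖F‖ ‖U‖ + ∫₀ᴸ |θ(x)|² dx ). -/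
open MeasureTheory Set intervalIntegral Complex

noncomputable section

/-- A (smooth) solution of the resolvent system `(iλ − 𝒜)U = F` with clamped/zero-flux
boundary conditions: the four ODEs on `(0, L)` together with
`u(0) = u(L) = 0`, `w(0) = w(L) = 0`, `q(0) = q(L) = 0`. -/
def ResolventSol (L η β κ τ : ℝ) (m δ p : ℝ → ℝ) (lam : ℝ)
    (f₁ f₂ f₃ f₄ u w θ q : ℝ → ℂ) : Prop :=
  ContDiff ℝ (⊤ : ℕ∞) u ∧ ContDiff ℝ (⊤ : ℕ∞) w ∧ ContDiff ℝ (⊤ : ℕ∞) θ ∧ ContDiff ℝ (⊤ : ℕ∞) q ∧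
  ContDiff ℝ (⊤ : ℕ∞) f₁ ∧ ContDiff ℝ (⊤ : ℕ∞) f₂ ∧ ContDiff ℝ (⊤ : ℕ∞) f₃ ∧ ContDiff ℝ (⊤ : ℕ∞) f₄ ∧
  (∀ x ∈ Ioo (0 : ℝ) L,
    (Complex.I * (lam : ℂ) * u x - w x = f₁ x) ∧
    (Complex.I * (lam : ℂ) * (m x : ℂ) * w x
        - deriv (fun y => (p y : ℂ) * deriv u y + 2 * (δ y : ℂ) * deriv w y) x
        + (η : ℂ) * deriv θ x = (m x : ℂ) * f₂ x) ∧
    (Complex.I * (lam : ℂ) * θ x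
        + deriv (fun y => (κ : ℂ) * q y + (η : ℂ) * w y) x = f₃ x) ∧
    (Complex.I * (lam : ℂ) * (τ : ℂ) * q x + (κ : ℂ) * deriv θ x + (β : ℂ) * q x
        = (τ : ℂ) * f₄ x)) ∧
  u 0 = 0 ∧ u L = 0 ∧ w 0 = 0 ∧ w L = 0 ∧ q 0 = 0 ∧ q L = 0

/-- Squared phase-space norm of `U = (u, w, θ, q)`. -/
def normUsq (L τ : ℝ) (m p : ℝ → ℝ) (u w θ q : ℝ → ℂ) : ℝ :=
  (∫ x in (0 : ℝ)..L, p x * ‖deriv u x‖ ^ 2) + (∫ x in (0 : ℝ)..L, m x * ‖w x‖ ^ 2)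
    + (∫ x in (0 : ℝ)..L, ‖θ x‖ ^ 2) + τ * ∫ x in (0 : ℝ)..L, ‖q x‖ ^ 2

/-- Squared phase-space norm of the data `F = (f₁, f₂, f₃, f₄)`. -/
def normFsq (L τ : ℝ) (m p : ℝ → ℝ) (f₁ f₂ f₃ f₄ : ℝ → ℂ) : ℝ :=
  (∫ x in (0 : ℝ)..L, p x * ‖deriv f₁ x‖ ^ 2) + (∫ x in (0 : ℝ)..L, m x * ‖f₂ x‖ ^ 2)
    + (∫ x in (0 : ℝ)..L, ‖f₃ x‖ ^ 2) + τ * ∫ x in (0 : ℝ)..L, ‖f₄ x‖ ^ 2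

/-- Real inner product on `ℂ`. -/
def rip (z w : ℂ) : ℝ := z.re * w.re + z.im * w.im

lemma norm_sq_eq_re_im (z : ℂ) : ‖z‖ ^ 2 = z.re * z.re + z.im * z.im := by
  rw [Complex.sq_norm, Complex.normSq_apply]

lemma rip_young (z w : ℂ) (t : ℝ) (ht : 0 < t) :
    rip z w ≤ (t * ‖z‖ ^ 2 + ‖w‖ ^ 2 / t) / 2 := by
  rw [norm_sq_eq_re_im, norm_sq_eq_re_im, rip]
  have h : (t * (z.re * z.re + z.im * z.im) + (w.re * w.re + w.im * w.im) / t) / 2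
      - (z.re * w.re + z.im * w.im)
      = ((t * z.re - w.re) ^ 2 + (t * z.im - w.im) ^ 2) / (2 * t) := by
    field_simp
    ring
  have h2 : 0 ≤ ((t * z.re - w.re) ^ 2 + (t * z.im - w.im) ^ 2) / (2 * t) := by positivity
  linarith

lemma rip_young_neg (z w : ℂ) (t : ℝ) (ht : 0 < t) :
    -rip z w ≤ (t * ‖z‖ ^ 2 + ‖w‖ ^ 2 / t) / 2 := by
  have := rip_young (-z) w t ht
  rw [norm_neg] at this
  simp only [rip, Complex.neg_re, Complex.neg_im] at this ⊢
  linarith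

lemma hasDerivAt_re {f : ℝ → ℂ} {f' : ℂ} {x : ℝ} (h : HasDerivAt f f' x) :
    HasDerivAt (fun y => (f y).re) f'.re x :=
  Complex.reCLM.hasFDerivAt.comp_hasDerivAt x h

lemma hasDerivAt_im {f : ℝ → ℂ} {f' : ℂ} {x : ℝ} (h : HasDerivAt f f' x) :
    HasDerivAt (fun y => (f y).im) f'.im x :=
  Complex.imCLM.hasFDerivAt.comp_hasDerivAt x h

lemma hasDerivAt_rip {f g : ℝ → ℂ} {f' g' : ℂ} {x : ℝ}
    (hf : HasDerivAt f f' x) (hg : HasDerivAt g g' x) :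
    HasDerivAt (fun y => rip (f y) (g y)) (rip f' (g x) + rip (f x) g') x := by
  have := ((hasDerivAt_re hf).mul (hasDerivAt_re hg)).add
    ((hasDerivAt_im hf).mul (hasDerivAt_im hg))
  refine this.congr_deriv ?_
  simp only [rip]
  ring

lemma contDiff_rip {f g : ℝ → ℂ} (hf : ContDiff ℝ 1 f) (hg : ContDiff ℝ 1 g) :
    ContDiff ℝ 1 (fun y => rip (f y) (g y)) := by
  have h1 := Complex.reCLM.contDiff.comp hf
  have h2 := Complex.imCLM.contDiff.comp hf
  have h3 := Complex.reCLM.contDiff.comp hg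
  have h4 := Complex.imCLM.contDiff.comp hg
  exact (h1.mul h3).add (h2.mul h4)

lemma continuous_rip {f g : ℝ → ℂ} (hf : Continuous f) (hg : Continuous g) :
    Continuous (fun y => rip (f y) (g y)) := by
  unfold rip
  fun_prop

lemma ftc_ac (L : ℝ) (hL : 0 < L) (g g' : ℝ → ℝ)
    (hg : AbsolutelyContinuousOnInterval g 0 L)
    (hd : ∀ᵐ x, x ∈ Ioo (0 : ℝ) L → HasDerivAt g (g' x) x) (h0 : g 0 = 0) (h1 : g L = 0) :
    ∫ x in (0 : ℝ)..L, g' x = 0 := by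
  have h := hg.integral_deriv_eq_sub
  rw [h0, h1, sub_zero] at h
  refine Eq.trans ?_ h
  apply intervalIntegral.integral_congr_ae
  have hne : ∀ᵐ x : ℝ, x ≠ L := by
    simp [ae_iff, measure_singleton]
  filter_upwards [hd, hne] with x hx hxL hxI
  rw [uIoc_of_le hL.le] at hxI
  exact (hx ⟨hxI.1, lt_of_le_of_ne hxI.2 hxL⟩).deriv.symm

lemma opt_young (S K X Y : ℝ) (hK : 0 ≤ K) (hX : 0 ≤ X) (hY : 0 ≤ Y)
    (h : ∀ t > 0, S ≤ K * ((t * X + Y / t) / 2)) : S ≤ K * (√X * √Y) := by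
  rcases lt_or_ge S 0 with hS | hS
  · exact hS.le.trans (by positivity)
  have key : ∀ t : ℝ, 0 ≤ (K * X) * (t * t) + (-(2 * S)) * t + K * Y := by
    intro t
    rcases le_or_gt t 0 with ht | ht
    · have : 0 ≤ (-(2 * S)) * t := by nlinarith
      have h1 : 0 ≤ (K * X) * (t * t) := mul_nonneg (by positivity) (mul_self_nonneg t)
      have h2 : 0 ≤ K * Y := by positivity
      linarith
    · have h1 := mul_le_mul_of_nonneg_right (h t ht) ht.le
      have h2 : K * ((t * X + Y / t) / 2) * t = K * (t * t * X + Y) / 2 := by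
        field_simp
      rw [h2] at h1
      linarith
  have hd := discrim_le_zero key
  unfold discrim at hd
  refine abs_le_of_sq_le_sq' ?_ (by positivity) |>.2
  have e1 := Real.sq_sqrt hX
  have e2 := Real.sq_sqrt hY
  calc S ^ 2 ≤ K ^ 2 * (X * Y) := by nlinarith
    _ = (K * (√X * √Y)) ^ 2 := by rw [mul_pow, mul_pow, e1, e2]

lemma poincare_s16 (L : ℝ) (hL : 0 < L) (v : ℝ → ℂ) (hv : ContDiff ℝ (⊤ : ℕ∞) v) (h0 : v 0 = 0) :
    ∫ x in (0 : ℝ)..L, ‖v x‖ ^ 2 ≤ 4 * L ^ 2 * ∫ x in (0 : ℝ)..L, ‖deriv v x‖ ^ 2 := by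
  have hvc : Continuous v := hv.continuous
  have hvd : Continuous (deriv v) := hv.continuous_deriv (by simp)
  have hdiff : ∀ x, HasDerivAt v (deriv v x) x := fun x =>
    (hv.differentiable (by simp) x).hasDerivAt
  have hr : Continuous (fun x => rip (deriv v x) (v x)) := continuous_rip hvd hvc
  have hd : ∀ x, HasDerivAt (fun x : ℝ => (x - L) * rip (v x) (v x))
      (‖v x‖ ^ 2 + 2 * (x - L) * rip (deriv v x) (v x)) x := by
    intro x
    have := ((hasDerivAt_id x).sub_const L).mul (hasDerivAt_rip (hdiff x) (hdiff x))
    refine this.congr_deriv ?_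
    rw [norm_sq_eq_re_im]
    simp only [rip, id]
    ring
  have hI : ∫ x in (0 : ℝ)..L, (‖v x‖ ^ 2 + 2 * (x - L) * rip (deriv v x) (v x)) = 0 := by
    rw [intervalIntegral.integral_eq_sub_of_hasDerivAt (fun x _ => hd x)
      (Continuous.intervalIntegrable (by fun_prop) _ _)]
    simp [rip, h0]
  have hle : ∫ x in (0 : ℝ)..L, ((1 / 2) * ‖v x‖ ^ 2) ≤
      ∫ x in (0 : ℝ)..L, ((‖v x‖ ^ 2 + 2 * (x - L) * rip (deriv v x) (v x))
        + 2 * L ^ 2 * ‖deriv v x‖ ^ 2) := by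
    apply intervalIntegral.integral_mono_on hL.le
      (Continuous.intervalIntegrable (by fun_prop) _ _)
      (Continuous.intervalIntegrable (by fun_prop) _ _)
    intro x hx
    have hy := rip_young (deriv v x) (v x) (2 * L) (by positivity)
    have hy' : rip (deriv v x) (v x) * (2 * (L - x)) ≤
        (2 * L * ‖deriv v x‖ ^ 2 + ‖v x‖ ^ 2 / (2 * L)) / 2 * (2 * (L - x)) :=
      mul_le_mul_of_nonneg_right hy (by linarith [hx.2])
    have hy2 : (2 * L * ‖deriv v x‖ ^ 2 + ‖v x‖ ^ 2 / (2 * L)) / 2 * (2 * (L - x)) ≤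
       (2 * L * ‖deriv v x‖ ^ 2 + ‖v x‖ ^ 2 / (2 * L)) / 2 * (2 * L) :=
      mul_le_mul_of_nonneg_left (by linarith [hx.1]) (by positivity)
    have e : (2 * L * ‖deriv v x‖ ^ 2 + ‖v x‖ ^ 2 / (2 * L)) / 2 * (2 * L)
      = 2 * L ^ 2 * ‖deriv v x‖ ^ 2 + ‖v x‖ ^ 2 / 2 := by
      field_simp
    linarith
  rw [intervalIntegral.integral_add (Continuous.intervalIntegrable (by fun_prop) _ _)
      (Continuous.intervalIntegrable (by fun_prop) _ _), hI,
    intervalIntegral.integral_const_mul, intervalIntegral.integral_const_mul] at hle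
  linarith

/-- algebra of the dissipation identity -/
lemma alg_dissip (η β κ τ lam m δ p : ℝ) (f₁' f₂ f₃ f₄ u' w w' θ θ' q q' D : ℂ)
    (h1 : w' = I * lam * u' - f₁')
    (h2 : I * lam * m * w - D + η * θ' = m * f₂)
    (h3 : I * lam * θ + (κ * q' + η * w') = f₃)
    (h4 : I * lam * τ * q + κ * θ' + β * q = τ * f₄) :
    rip D w + rip ((p : ℂ) * u' + 2 * (δ : ℂ) * w') w' - η * (rip θ' w + rip θ w')
      - κ * (rip q' θ + rip q θ')
    = 2 * δ * ‖w'‖ ^ 2 + β * ‖q‖ ^ 2 - m * rip f₂ w - p * rip f₁' u' - rip f₃ θ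
      - τ * rip f₄ q := by
  have a1 := congrArg Complex.re h1
  have b1 := congrArg Complex.im h1
  have a2 := congrArg Complex.re h2
  have b2 := congrArg Complex.im h2
  have a3 := congrArg Complex.re h3
  have b3 := congrArg Complex.im h3
  have a4 := congrArg Complex.re h4
  have b4 := congrArg Complex.im h4
  rw [norm_sq_eq_re_im, norm_sq_eq_re_im]
  simp at a1 b1 a2 b2 a3 b3 a4 b4
  simp [rip]
  linear_combination (p * u'.re) * a1 + (p * u'.im) * b1 - w.re * a2 - w.im * b2
    - θ.re * a3 - θ.im * b3 - q.re * a4 - q.im * b4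

lemma alg_mult (η lam m δ p : ℝ) (f₁ f₂ u u' w w' θ θ' D : ℂ)
    (h1 : I * lam * u - w = f₁)
    (h2 : I * lam * m * w - D + η * θ' = m * f₂) :
    rip D u + rip ((p : ℂ) * u' + 2 * (δ : ℂ) * w') u' - η * (rip θ' u + rip θ u')
    = p * ‖u'‖ ^ 2 - m * ‖w‖ ^ 2 - m * rip f₁ w - m * rip f₂ u + 2 * δ * rip w' u'
      - η * rip θ u' := by
  have a1 := congrArg Complex.re h1
  have b1 := congrArg Complex.im h1
  have a2 := congrArg Complex.re h2
  have b2 := congrArg Complex.im h2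
  rw [norm_sq_eq_re_im, norm_sq_eq_re_im]
  simp at a1 b1 a2 b2
  simp [rip]
  linear_combination -u.re * a2 - u.im * b2 - m * w.re * a1 - m * w.im * b1

lemma ac_flux (L : ℝ) (hL : 0 < L) (p δ : ℝ → ℝ) (Kp Kδ : NNReal)
    (hp : LipschitzOnWith Kp p (Icc 0 L)) (hδ : LipschitzOnWith Kδ δ (Icc 0 L))
    (a b v : ℝ → ℂ) (c : ℝ → ℝ) (ha : ContDiff ℝ 1 a) (hb : ContDiff ℝ 1 b)
    (hv : ContDiff ℝ 1 v) (hc : ContDiff ℝ 1 c) :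
    AbsolutelyContinuousOnInterval
      (fun x => rip ((p x : ℂ) * a x + 2 * (δ x : ℂ) * b x) (v x) - c x) 0 L := by
  rw [← uIcc_of_le hL.le] at hp hδ
  have h := ((hp.absolutelyContinuousOnInterval.mul
      (contDiff_rip ha hv).contDiffOn.absolutelyContinuousOnInterval).add
    ((hδ.absolutelyContinuousOnInterval.mul
      (contDiff_rip hb hv).contDiffOn.absolutelyContinuousOnInterval).const_mul 2)).sub
    hc.contDiffOn.absolutelyContinuousOnInterval
  refine (congrArg (fun g => AbsolutelyContinuousOnInterval g 0 L) (funext fun x => ?_)).mpr h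
  simp [rip]
  ring

lemma ae_flux_deriv (L : ℝ) (hL : 0 < L) (p δ : ℝ → ℝ) (Kp Kδ : NNReal)
    (hp : LipschitzOnWith Kp p (Icc 0 L)) (hδ : LipschitzOnWith Kδ δ (Icc 0 L))
    (a b : ℝ → ℂ) (ha : ContDiff ℝ 1 a) (hb : ContDiff ℝ 1 b) :
    ∀ᵐ x, x ∈ Ioo (0 : ℝ) L → HasDerivAt (fun y => (p y : ℂ) * a y + 2 * (δ y : ℂ) * b y)
      (deriv (fun y => (p y : ℂ) * a y + 2 * (δ y : ℂ) * b y) x) x := by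
  rw [← uIcc_of_le hL.le] at hp hδ
  filter_upwards [hp.absolutelyContinuousOnInterval.ae_differentiableAt,
    hδ.absolutelyContinuousOnInterval.ae_differentiableAt] with x h1 h2 hx
  have hx' : x ∈ uIcc 0 L := by
    rw [uIcc_of_le hL.le]; exact Ioo_subset_Icc_self hx
  have d1 := (h1 hx').hasDerivAt.ofReal_comp
  have d2 := (h2 hx').hasDerivAt.ofReal_comp
  have d3 := (ha.differentiable (by simp) x).hasDerivAt
  have d4 := (hb.differentiable (by simp) x).hasDerivAt
  exact ((d1.mul d3).add ((d2.const_mul 2).mul d4)).differentiableAt.hasDerivAt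

set_option maxHeartbeats 2000000 in
theorem resolvent_estimate_u
    (L η β κ τ : ℝ) (hL : 0 < L) (hη : 0 < η) (hβ : 0 < β) (hκ : 0 < κ) (hτ : 0 < τ)
    (m δ p : ℝ → ℝ)
    (hmLip : ∃ K, LipschitzOnWith K m (Icc 0 L))
    (hδLip : ∃ K, LipschitzOnWith K δ (Icc 0 L))
    (hpLip : ∃ K, LipschitzOnWith K p (Icc 0 L))
    (hmpos : ∀ x ∈ Icc (0 : ℝ) L, 0 < m x)
    (hδpos : ∀ x ∈ Icc (0 : ℝ) L, 0 < δ x)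
    (hppos : ∀ x ∈ Icc (0 : ℝ) L, 0 < p x)
    :
    ∃ C > (0 : ℝ),
      ∀ (lam : ℝ) (f₁ f₂ f₃ f₄ u w θ q : ℝ → ℂ),
        ResolventSol L η β κ τ m δ p lam f₁ f₂ f₃ f₄ u w θ q →
          (∫ x in (0 : ℝ)..L, p x * ‖deriv u x‖ ^ 2)
            ≤ C * (Real.sqrt (normFsq L τ m p f₁ f₂ f₃ f₄)
                * Real.sqrt (normUsq L τ m p u w θ q)
              + ∫ x in (0 : ℝ)..L, ‖θ x‖ ^ 2) := by
  obtain ⟨Km, hmL⟩ := hmLip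
  obtain ⟨Kδ, hδL⟩ := hδLip
  obtain ⟨Kp, hpL⟩ := hpLip
  have cm : ContinuousOn m (Icc 0 L) := hmL.continuousOn
  have cδ : ContinuousOn δ (Icc 0 L) := hδL.continuousOn
  have cp : ContinuousOn p (Icc 0 L) := hpL.continuousOn
  have hne : (Icc (0 : ℝ) L).Nonempty := ⟨0, by simp [hL.le]⟩
  obtain ⟨xm, hxm, hmmax⟩ := isCompact_Icc.exists_isMaxOn hne cm
  obtain ⟨xD, hxD, hDmax⟩ := isCompact_Icc.exists_isMaxOn hne cδ
  obtain ⟨xd, hxd, hdmin⟩ := isCompact_Icc.exists_isMinOn hne cδ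
  obtain ⟨xp, hxp, hpmin⟩ := isCompact_Icc.exists_isMinOn hne cp
  obtain ⟨M, hM⟩ : ∃ M, M = m xm := ⟨_, rfl⟩
  obtain ⟨Dm, hDm⟩ : ∃ M, M = δ xD := ⟨_, rfl⟩
  obtain ⟨d0, hd0⟩ : ∃ M, M = δ xd := ⟨_, rfl⟩
  obtain ⟨p0, hp0⟩ : ∃ M, M = p xp := ⟨_, rfl⟩
  have Mpos : 0 < M := hM ▸ hmpos _ hxm
  have Dmpos : 0 < Dm := hDm ▸ hδpos _ hxD
  have d0pos : 0 < d0 := hd0 ▸ hδpos _ hxd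
  have p0pos : 0 < p0 := hp0 ▸ hppos _ hxp
  have hmM : ∀ x ∈ Icc 0 L, m x ≤ M := fun x hx => hM ▸ hmmax hx
  have hδD : ∀ x ∈ Icc 0 L, δ x ≤ Dm := fun x hx => hDm ▸ hDmax hx
  have hδd : ∀ x ∈ Icc 0 L, d0 ≤ δ x := fun x hx => hd0 ▸ hdmin hx
  have hpp : ∀ x ∈ Icc 0 L, p0 ≤ p x := fun x hx => hp0 ▸ hpmin hx
  clear hM hDm hd0 hp0 hmmax hDmax hdmin hpmin
  obtain ⟨P, hP⟩ : ∃ P, P = 4 * L ^ 2 * M / p0 := ⟨_, rfl⟩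
  obtain ⟨P', hP'⟩ : ∃ P, P = 4 * L ^ 2 * M / d0 := ⟨_, rfl⟩
  obtain ⟨c1, hc1⟩ : ∃ c, c = 4 * Dm / p0 := ⟨_, rfl⟩
  obtain ⟨c2, hc2⟩ : ∃ c, c = η ^ 2 / p0 := ⟨_, rfl⟩
  have Ppos : 0 < P := by rw [hP]; positivity
  have P'pos : 0 < P' := by rw [hP']; positivity
  have c1pos : 0 < c1 := by rw [hc1]; positivity
  have c2pos : 0 < c2 := by rw [hc2]; positivity
  refine ⟨P' + c1 + 2 * c2 + 2 * (P + 1), by positivity, ?_⟩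
  intro lam f₁ f₂ f₃ f₄ u w θ q hsol
  obtain ⟨su, sw, sθ, sq, s1, s2, s3, s4, heq, u0, uL, w0, wL, q0, qL⟩ := hsol
  have cu := su.continuous
  have cw := sw.continuous
  have cθ := sθ.continuous
  have cq := sq.continuous
  have cf1 := s1.continuous
  have cf2 := s2.continuous
  have cf3 := s3.continuous
  have cf4 := s4.continuous
  have cdu : Continuous (deriv u) := su.continuous_deriv (by simp)
  have cdw : Continuous (deriv w) := sw.continuous_deriv (by simp)
  have cdf1 : Continuous (deriv f₁) := s1.continuous_deriv (by simp)
  have hone : (1 : WithTop ℕ∞) ≤ ((⊤ : ℕ∞) : WithTop ℕ∞) := by simp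
  have hu1 : ContDiff ℝ 1 u := su.of_le hone
  have hw1 : ContDiff ℝ 1 w := sw.of_le hone
  have hθ1 : ContDiff ℝ 1 θ := sθ.of_le hone
  have hq1 : ContDiff ℝ 1 q := sq.of_le hone
  have hdu1 : ContDiff ℝ 1 (deriv u) := ((contDiff_infty_iff_deriv.mp su).2).of_le hone
  have hdw1 : ContDiff ℝ 1 (deriv w) := ((contDiff_infty_iff_deriv.mp sw).2).of_le hone
  have Du : ∀ x, HasDerivAt u (deriv u x) x := fun x => (su.differentiable (by simp) x).hasDerivAt
  have Dw : ∀ x, HasDerivAt w (deriv w x) x := fun x => (sw.differentiable (by simp) x).hasDerivAt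
  have Dθ : ∀ x, HasDerivAt θ (deriv θ x) x := fun x => (sθ.differentiable (by simp) x).hasDerivAt
  have Dq : ∀ x, HasDerivAt q (deriv q x) x := fun x => (sq.differentiable (by simp) x).hasDerivAt
  -- consequences of the first equation
  have hf10 : f₁ 0 = 0 := by
    have hE : EqOn f₁ (fun x => I * (lam : ℂ) * u x - w x) (Ioo 0 L) :=
      fun x hx => (heq x hx).1.symm
    have hcl := hE.closure cf1 (by fun_prop)
    rw [closure_Ioo hL.ne] at hcl
    have := hcl (show (0 : ℝ) ∈ Icc 0 L from ⟨le_rfl, hL.le⟩)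
    simpa [u0, w0] using this
  have hdw : ∀ x ∈ Ioo 0 L, deriv w x = I * lam * deriv u x - deriv f₁ x := by
    intro x hx
    have hE : f₁ =ᶠ[nhds x] (fun x => I * (lam : ℂ) * u x - w x) := by
      filter_upwards [Ioo_mem_nhds hx.1 hx.2] with y hy
      exact (heq y hy).1.symm
    have h := hE.deriv_eq
    have h2 : HasDerivAt (fun x => I * (lam : ℂ) * u x - w x) _ x :=
      ((Du x).const_mul (I * (lam : ℂ))).sub (Dw x)
    rw [h2.deriv] at h
    rw [h]; ring
  have hdq : ∀ x, deriv (fun y => (κ : ℂ) * q y + (η : ℂ) * w y) x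
      = κ * deriv q x + η * deriv w x := fun x =>
    (((Dq x).const_mul (κ : ℂ)).add ((Dw x).const_mul (η : ℂ))).deriv
  have hflux := ae_flux_deriv L hL p δ Kp Kδ hpL hδL (deriv u) (deriv w) hdu1 hdw1
  -- dissipation identity
  have hA : ∫ x in (0 : ℝ)..L, (2 * δ x * ‖deriv w x‖ ^ 2 + β * ‖q x‖ ^ 2 - m x * rip (f₂ x) (w x)
      - p x * rip (deriv f₁ x) (deriv u x) - rip (f₃ x) (θ x) - τ * rip (f₄ x) (q x)) = 0 := by
    refine ftc_ac L hL _ _ (ac_flux L hL p δ Kp Kδ hpL hδL (deriv u) (deriv w) w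
      (fun x => η * rip (θ x) (w x) + κ * rip (q x) (θ x)) hdu1 hdw1 hw1
      ((contDiff_const.mul (contDiff_rip hθ1 hw1)).add
        (contDiff_const.mul (contDiff_rip hq1 hθ1)))) ?_ ?_ ?_
    · filter_upwards [hflux] with x hx hxI
      have h := (hasDerivAt_rip (hx hxI) (Dw x)).sub
        (((hasDerivAt_rip (Dθ x) (Dw x)).const_mul η).add
          ((hasDerivAt_rip (Dq x) (Dθ x)).const_mul κ))
      refine h.congr_deriv ?_
      obtain ⟨e1, e2, e3, e4⟩ := heq x hxI
      rw [hdq] at e3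
      rw [← alg_dissip η β κ τ lam (m x) (δ x) (p x) (deriv f₁ x) (f₂ x) (f₃ x) (f₄ x)
        (deriv u x) (w x) (deriv w x) (θ x) (deriv θ x) (q x) (deriv q x) _ (hdw x hxI) e2 e3 e4]
      ring
    · simp [rip, w0, q0]
    · simp [rip, wL, qL]
  -- multiplier identity
  have hB : ∫ x in (0 : ℝ)..L, (p x * ‖deriv u x‖ ^ 2 - m x * ‖w x‖ ^ 2 - m x * rip (f₁ x) (w x)
      - m x * rip (f₂ x) (u x) + 2 * δ x * rip (deriv w x) (deriv u x)
      - η * rip (θ x) (deriv u x)) = 0 := by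
    refine ftc_ac L hL _ _ (ac_flux L hL p δ Kp Kδ hpL hδL (deriv u) (deriv w) u
      (fun x => η * rip (θ x) (u x)) hdu1 hdw1 hu1
      (contDiff_const.mul (contDiff_rip hθ1 hu1))) ?_ ?_ ?_
    · filter_upwards [hflux] with x hx hxI
      have h := (hasDerivAt_rip (hx hxI) (Du x)).sub ((hasDerivAt_rip (Dθ x) (Du x)).const_mul η)
      refine h.congr_deriv ?_
      obtain ⟨e1, e2, e3, e4⟩ := heq x hxI
      rw [← alg_mult η lam (m x) (δ x) (p x) (f₁ x) (f₂ x) (u x)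
        (deriv u x) (w x) (deriv w x) (θ x) (deriv θ x) _ e1 e2]
    · simp [rip, u0]
    · simp [rip, uL]
  -- integrability
  have ii : ∀ g : ℝ → ℝ, ContinuousOn g (Icc 0 L) → IntervalIntegrable g volume 0 L :=
    fun g hg => hg.intervalIntegrable_of_Icc hL.le
  have nn : ∀ g : ℝ → ℝ, (∀ x ∈ Icc 0 L, 0 ≤ g x) → 0 ≤ ∫ x in (0 : ℝ)..L, g x :=
    fun g hg => intervalIntegral.integral_nonneg hL.le hg
  have iA := ii (fun x => p x * ‖deriv u x‖ ^ 2) (by fun_prop)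
  have iB := ii (fun x => m x * ‖w x‖ ^ 2) (by fun_prop)
  have iT := ii (fun x => ‖θ x‖ ^ 2) (by fun_prop)
  have iQ := ii (fun x => ‖q x‖ ^ 2) (by fun_prop)
  have iW := ii (fun x => δ x * ‖deriv w x‖ ^ 2) (by fun_prop)
  have iF1 := ii (fun x => p x * ‖deriv f₁ x‖ ^ 2) (by fun_prop)
  have iF2 := ii (fun x => m x * ‖f₂ x‖ ^ 2) (by fun_prop)
  have iF3 := ii (fun x => ‖f₃ x‖ ^ 2) (by fun_prop)
  have iF4 := ii (fun x => ‖f₄ x‖ ^ 2) (by fun_prop)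
  have iu := ii (fun x => ‖u x‖ ^ 2) (by fun_prop)
  have iw := ii (fun x => ‖w x‖ ^ 2) (by fun_prop)
  have if1 := ii (fun x => ‖f₁ x‖ ^ 2) (by fun_prop)
  have nA := nn (fun x => p x * ‖deriv u x‖ ^ 2)
    (fun x hx => mul_nonneg (hppos x hx).le (by positivity))
  have nB := nn (fun x => m x * ‖w x‖ ^ 2)
    (fun x hx => mul_nonneg (hmpos x hx).le (by positivity))
  have nT := nn (fun x => ‖θ x‖ ^ 2) (fun x hx => by positivity)
  have nQ := nn (fun x => ‖q x‖ ^ 2) (fun x hx => by positivity)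
  have nF1 := nn (fun x => p x * ‖deriv f₁ x‖ ^ 2)
    (fun x hx => mul_nonneg (hppos x hx).le (by positivity))
  have nF2 := nn (fun x => m x * ‖f₂ x‖ ^ 2)
    (fun x hx => mul_nonneg (hmpos x hx).le (by positivity))
  have nF3 := nn (fun x => ‖f₃ x‖ ^ 2) (fun x hx => by positivity)
  have nF4 := nn (fun x => ‖f₄ x‖ ^ 2) (fun x hx => by positivity)
  have iEA := ii (fun x => 2 * δ x * ‖deriv w x‖ ^ 2 + β * ‖q x‖ ^ 2 - m x * rip (f₂ x) (w x)
      - p x * rip (deriv f₁ x) (deriv u x) - rip (f₃ x) (θ x) - τ * rip (f₄ x) (q x))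
      (by unfold rip; fun_prop)
  have iEB := ii (fun x => p x * ‖deriv u x‖ ^ 2 - m x * ‖w x‖ ^ 2 - m x * rip (f₁ x) (w x)
      - m x * rip (f₂ x) (u x) + 2 * δ x * rip (deriv w x) (deriv u x)
      - η * rip (θ x) (deriv u x)) (by unfold rip; fun_prop)
  -- Poincare inequalities
  have poin : ∀ (v : ℝ → ℂ) (r : ℝ → ℝ) (r0 : ℝ), ContDiff ℝ (⊤ : ℕ∞) v → v 0 = 0 → 0 < r0 →
      ContinuousOn r (Icc 0 L) → (∀ x ∈ Icc 0 L, r0 ≤ r x) →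
      M * ∫ x in (0 : ℝ)..L, ‖v x‖ ^ 2 ≤
        4 * L ^ 2 * M / r0 * ∫ x in (0 : ℝ)..L, r x * ‖deriv v x‖ ^ 2 := by
    intro v r r0 hv hv0 hr0 hr hrr
    have cdv : Continuous (deriv v) := hv.continuous_deriv (by simp)
    have h1 := poincare_s16 L hL v hv hv0
    have h2 : ∫ x in (0 : ℝ)..L, r0 * ‖deriv v x‖ ^ 2 ≤
        ∫ x in (0 : ℝ)..L, r x * ‖deriv v x‖ ^ 2 :=
      intervalIntegral.integral_mono_on hL.le (ii _ (by fun_prop)) (ii _ (by fun_prop))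
        (fun x hx => mul_le_mul_of_nonneg_right (hrr x hx) (by positivity))
    rw [intervalIntegral.integral_const_mul] at h2
    calc _ ≤ M * (4 * L ^ 2 * ∫ x in (0 : ℝ)..L, ‖deriv v x‖ ^ 2) := by gcongr
      _ = 4 * L ^ 2 * M / r0 * (r0 * ∫ x in (0 : ℝ)..L, ‖deriv v x‖ ^ 2) := by field_simp
      _ ≤ _ := by gcongr
  have pu := poin u p p0 su u0 p0pos cp hpp
  have pf := poin f₁ p p0 s1 hf10 p0pos cp hpp
  have pw := poin w δ d0 sw w0 d0pos cδ hδd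
  have hBw : ∫ x in (0 : ℝ)..L, m x * ‖w x‖ ^ 2 ≤ M * ∫ x in (0 : ℝ)..L, ‖w x‖ ^ 2 := by
    rw [← intervalIntegral.integral_const_mul]
    exact intervalIntegral.integral_mono_on hL.le iB (iw.const_mul _)
      (fun x hx => mul_le_mul_of_nonneg_right (hmM x hx) (by positivity))
  rw [← hP] at pu pf
  rw [← hP'] at pw
  -- dissipation estimate
  have hW : ∀ t > 0, 2 * ∫ x in (0 : ℝ)..L, δ x * ‖deriv w x‖ ^ 2 ≤
      1 * ((t * normFsq L τ m p f₁ f₂ f₃ f₄ + normUsq L τ m p u w θ q / t) / 2) := by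
    intro t ht
    have hle : ∫ x in (0 : ℝ)..L, 2 * (δ x * ‖deriv w x‖ ^ 2) ≤
      ∫ x in (0 : ℝ)..L, ((2 * δ x * ‖deriv w x‖ ^ 2 + β * ‖q x‖ ^ 2 - m x * rip (f₂ x) (w x)
      - p x * rip (deriv f₁ x) (deriv u x) - rip (f₃ x) (θ x) - τ * rip (f₄ x) (q x))
      + t / 2 * (p x * ‖deriv f₁ x‖ ^ 2 + m x * ‖f₂ x‖ ^ 2 + ‖f₃ x‖ ^ 2 + τ * ‖f₄ x‖ ^ 2)
      + 1 / (2 * t) * (p x * ‖deriv u x‖ ^ 2 + m x * ‖w x‖ ^ 2 + ‖θ x‖ ^ 2 + τ * ‖q x‖ ^ 2)) := by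
      refine intervalIntegral.integral_mono_on hL.le (iW.const_mul 2)
        ((iEA.add ((((iF1.add iF2).add iF3).add (iF4.const_mul τ)).const_mul (t / 2))).add
        ((((iA.add iB).add iT).add (iQ.const_mul τ)).const_mul (1 / (2 * t)))) ?_
      intro x hx
      have y1 := mul_le_mul_of_nonneg_left (rip_young (deriv f₁ x) (deriv u x) t ht)
        (hppos x hx).le
      have y2 := mul_le_mul_of_nonneg_left (rip_young (f₂ x) (w x) t ht) (hmpos x hx).le
      have y3 := rip_young (f₃ x) (θ x) t ht
      have y4 := mul_le_mul_of_nonneg_left (rip_young (f₄ x) (q x) t ht) hτ.le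
      have y5 : 0 ≤ β * ‖q x‖ ^ 2 := by positivity
      have e : t / 2 * (p x * ‖deriv f₁ x‖ ^ 2 + m x * ‖f₂ x‖ ^ 2 + ‖f₃ x‖ ^ 2 + τ * ‖f₄ x‖ ^ 2)
        + 1 / (2 * t) * (p x * ‖deriv u x‖ ^ 2 + m x * ‖w x‖ ^ 2 + ‖θ x‖ ^ 2 + τ * ‖q x‖ ^ 2)
        = p x * ((t * ‖deriv f₁ x‖ ^ 2 + ‖deriv u x‖ ^ 2 / t) / 2)
        + m x * ((t * ‖f₂ x‖ ^ 2 + ‖w x‖ ^ 2 / t) / 2)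
        + (t * ‖f₃ x‖ ^ 2 + ‖θ x‖ ^ 2 / t) / 2
        + τ * ((t * ‖f₄ x‖ ^ 2 + ‖q x‖ ^ 2 / t) / 2) := by
        field_simp
        ring
      linarith
    rw [intervalIntegral.integral_add
        (iEA.add ((((iF1.add iF2).add iF3).add (iF4.const_mul τ)).const_mul (t / 2)))
        ((((iA.add iB).add iT).add (iQ.const_mul τ)).const_mul (1 / (2 * t))),
      intervalIntegral.integral_add iEA
        ((((iF1.add iF2).add iF3).add (iF4.const_mul τ)).const_mul (t / 2)),
      hA, intervalIntegral.integral_const_mul, intervalIntegral.integral_const_mul,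
      intervalIntegral.integral_const_mul,
      intervalIntegral.integral_add ((iF1.add iF2).add iF3) (iF4.const_mul τ),
      intervalIntegral.integral_add (iF1.add iF2) iF3,
      intervalIntegral.integral_add iF1 iF2,
      intervalIntegral.integral_add ((iA.add iB).add iT) (iQ.const_mul τ),
      intervalIntegral.integral_add (iA.add iB) iT,
      intervalIntegral.integral_add iA iB,
      intervalIntegral.integral_const_mul, intervalIntegral.integral_const_mul] at hle
    refine hle.trans (le_of_eq ?_)
    unfold normFsq normUsq
    field_simp
    ring
  have nF : 0 ≤ normFsq L τ m p f₁ f₂ f₃ f₄ := by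
    unfold normFsq
    have := mul_nonneg hτ.le nF4
    linarith
  have nU : 0 ≤ normUsq L τ m p u w θ q := by
    unfold normUsq
    have := mul_nonneg hτ.le nQ
    linarith
  have hW' := opt_young _ _ _ _ zero_le_one nF nU hW
  -- multiplier estimate
  have hM : ∀ t > 0, (1 / 2) * (∫ x in (0 : ℝ)..L, p x * ‖deriv u x‖ ^ 2)
      - (P' + c1) * (∫ x in (0 : ℝ)..L, δ x * ‖deriv w x‖ ^ 2)
      - c2 * (∫ x in (0 : ℝ)..L, ‖θ x‖ ^ 2) ≤
      (P + 1) * ((t * normFsq L τ m p f₁ f₂ f₃ f₄ + normUsq L τ m p u w θ q / t) / 2) := by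
    intro t ht
    have hle : ∫ x in (0 : ℝ)..L, (1 / 2) * (p x * ‖deriv u x‖ ^ 2) ≤
      ∫ x in (0 : ℝ)..L, ((((p x * ‖deriv u x‖ ^ 2 - m x * ‖w x‖ ^ 2 - m x * rip (f₁ x) (w x)
      - m x * rip (f₂ x) (u x) + 2 * δ x * rip (deriv w x) (deriv u x)
      - η * rip (θ x) (deriv u x)) + m x * ‖w x‖ ^ 2)
      + (c1 * (δ x * ‖deriv w x‖ ^ 2) + c2 * ‖θ x‖ ^ 2))
      + (t / 2 * (M * ‖f₁ x‖ ^ 2 + m x * ‖f₂ x‖ ^ 2)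
      + 1 / (2 * t) * (m x * ‖w x‖ ^ 2 + M * ‖u x‖ ^ 2))) := by
      refine intervalIntegral.integral_mono_on hL.le (iA.const_mul (1 / 2))
        (((iEB.add iB).add ((iW.const_mul c1).add (iT.const_mul c2))).add
        ((((if1.const_mul M).add iF2).const_mul (t / 2)).add
        ((iB.add (iu.const_mul M)).const_mul (1 / (2 * t))))) ?_
      intro x hx
      have mx := (hmpos x hx).le
      have y1 := mul_le_mul_of_nonneg_left (rip_young (f₁ x) (w x) t ht) mx
      have y2 := mul_le_mul_of_nonneg_left (rip_young (f₂ x) (u x) t ht) mx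
      have y3 := mul_le_mul_of_nonneg_left (rip_young_neg (deriv w x) (deriv u x) c1 c1pos)
        (mul_nonneg zero_le_two (hδpos x hx).le)
      have y4 := mul_le_mul_of_nonneg_left (rip_young (θ x) (deriv u x) (2 * η / p0)
        (by positivity)) hη.le
      have e1 : m x * ((t * ‖f₁ x‖ ^ 2 + ‖w x‖ ^ 2 / t) / 2)
          = t / 2 * (m x * ‖f₁ x‖ ^ 2) + 1 / (2 * t) * (m x * ‖w x‖ ^ 2) := by
        field_simp
      have e2 : m x * ((t * ‖f₂ x‖ ^ 2 + ‖u x‖ ^ 2 / t) / 2)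
          = t / 2 * (m x * ‖f₂ x‖ ^ 2) + 1 / (2 * t) * (m x * ‖u x‖ ^ 2) := by
        field_simp
      have e3 : 2 * δ x * ((c1 * ‖deriv w x‖ ^ 2 + ‖deriv u x‖ ^ 2 / c1) / 2)
          = c1 * (δ x * ‖deriv w x‖ ^ 2) + p0 / 4 * (δ x / Dm) * ‖deriv u x‖ ^ 2 := by
        rw [hc1]
        field_simp
      have e4 : η * ((2 * η / p0 * ‖θ x‖ ^ 2 + ‖deriv u x‖ ^ 2 / (2 * η / p0)) / 2)
          = c2 * ‖θ x‖ ^ 2 + p0 / 4 * ‖deriv u x‖ ^ 2 := by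
        rw [hc2]
        field_simp
        ring
      have g1 : t / 2 * (m x * ‖f₁ x‖ ^ 2) ≤ t / 2 * (M * ‖f₁ x‖ ^ 2) := by
        have := hmM x hx
        gcongr
      have g2 : 1 / (2 * t) * (m x * ‖u x‖ ^ 2) ≤ 1 / (2 * t) * (M * ‖u x‖ ^ 2) := by
        have := hmM x hx
        gcongr
      have g3 : p0 / 4 * (δ x / Dm) * ‖deriv u x‖ ^ 2 ≤ p0 / 4 * 1 * ‖deriv u x‖ ^ 2 := by
        have : δ x / Dm ≤ 1 := (div_le_one Dmpos).2 (hδD x hx)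
        gcongr
      have g4 : p0 * ‖deriv u x‖ ^ 2 ≤ p x * ‖deriv u x‖ ^ 2 := by
        have := hpp x hx
        gcongr
      rw [e1] at y1
      rw [e2] at y2
      rw [e3] at y3
      rw [e4] at y4
      linarith
    rw [intervalIntegral.integral_add
        ((iEB.add iB).add ((iW.const_mul c1).add (iT.const_mul c2)))
        ((((if1.const_mul M).add iF2).const_mul (t / 2)).add
        ((iB.add (iu.const_mul M)).const_mul (1 / (2 * t)))),
      intervalIntegral.integral_add (iEB.add iB) ((iW.const_mul c1).add (iT.const_mul c2)),
      intervalIntegral.integral_add iEB iB, hB,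
      intervalIntegral.integral_add (iW.const_mul c1) (iT.const_mul c2),
      intervalIntegral.integral_add (((if1.const_mul M).add iF2).const_mul (t / 2))
        ((iB.add (iu.const_mul M)).const_mul (1 / (2 * t))),
      intervalIntegral.integral_const_mul, intervalIntegral.integral_const_mul,
      intervalIntegral.integral_const_mul, intervalIntegral.integral_const_mul,
      intervalIntegral.integral_const_mul,
      intervalIntegral.integral_add (if1.const_mul M) iF2,
      intervalIntegral.integral_add iB (iu.const_mul M),
      intervalIntegral.integral_const_mul, intervalIntegral.integral_const_mul] at hle
    have k1 : M * (∫ x in (0 : ℝ)..L, ‖f₁ x‖ ^ 2) + (∫ x in (0 : ℝ)..L, m x * ‖f₂ x‖ ^ 2)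
        ≤ (P + 1) * normFsq L τ m p f₁ f₂ f₃ f₄ := by
      unfold normFsq
      have := mul_nonneg hτ.le nF4
      nlinarith [mul_nonneg Ppos.le this, mul_nonneg Ppos.le nF2, mul_nonneg Ppos.le nF3]
    have k2 : (∫ x in (0 : ℝ)..L, m x * ‖w x‖ ^ 2) + M * (∫ x in (0 : ℝ)..L, ‖u x‖ ^ 2)
        ≤ (P + 1) * normUsq L τ m p u w θ q := by
      unfold normUsq
      have := mul_nonneg hτ.le nQ
      nlinarith [mul_nonneg Ppos.le this, mul_nonneg Ppos.le nB, mul_nonneg Ppos.le nT]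
    have k3 := mul_le_mul_of_nonneg_left k1 (show 0 ≤ t / 2 by positivity)
    have k4 := mul_le_mul_of_nonneg_left k2 (show 0 ≤ 1 / (2 * t) by positivity)
    have e : (P + 1) * ((t * normFsq L τ m p f₁ f₂ f₃ f₄ + normUsq L τ m p u w θ q / t) / 2)
      = t / 2 * ((P + 1) * normFsq L τ m p f₁ f₂ f₃ f₄)
        + 1 / (2 * t) * ((P + 1) * normUsq L τ m p u w θ q) := by
      field_simp
    rw [e]
    linarith
  have hM' := opt_young _ _ _ _ (by positivity) nF nU hM
  have hN : 0 ≤ √(normFsq L τ m p f₁ f₂ f₃ f₄) * √(normUsq L τ m p u w θ q) := by positivity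
  have f1 := mul_le_mul_of_nonneg_left hW' (show 0 ≤ P' + c1 by positivity)
  have f2 := mul_nonneg c2pos.le hN
  have f3 := mul_nonneg (show 0 ≤ P' + c1 + 2 * (P + 1) by positivity) nT
  linarith
end
end
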